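/- (Theorem 1, STRICT guarantee.) In the crowd-teaching setting, fix ε > 0 with 0 < P0(h*)·ε < 2E and E > 0, where E = Σ_{h∈H} P0(h)·err(h,h*). Suppose some set A ⊆ X achieves E[err_L|A] ≤ P0(h*)·ε/2, and let OPT = min{|A| : A ⊆ X, E[err_L|A] ≤ P0(h*)·ε/2}. Let A_ℓ be the set produced by ℓ iterations of greedy maximization of F starting from the empty set. Then for every integer ℓ ≥ OPT · ln(2E/(P0(h*)·ε)), the set A_ℓ satisfies E[err_L|A_ℓ] ≤ ε. -/

import Mathlib

open scoped Classical BigOperators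

/-!
Every learner weight `Q h` is the prior times a product of factors in `[0, 1]`, hence antitone and
supermodular in the teaching set, so the surrogate `F` is monotone and submodular. For such `F`,
some element of a competitor `B` closes at least a `1 / |B|` fraction of the gap `F B - F (A t)`;
greedy selection does no worse, so the gap decays like `exp (-t / |B|)`. Finally, the expected error
of `S` is the unnormalized error `∑ h, Q h S * err h = E - F S` divided by a normalizer that lies
between `P0 h*`, because the target is never penalized, and `1`; the factor `P0 h*` in the accuracy
demanded of `B` pays for this division.
-/

section Submodular

variable {X R : Type*} [DecidableEq X]

/-- Submodularity of a set function, in its diminishing-returns form. A supermodular function is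
expressed as one whose negation is submodular. -/
def IsSubmodular [LE R] [Sub R] (f : Finset X → R) : Prop :=
  ∀ ⦃S T : Finset X⦄, S ⊆ T → ∀ x ∉ T, f (insert x T) - f T ≤ f (insert x S) - f S

theorem IsSubmodular.union_sub_le_sum [AddCommGroup R] [PartialOrder R] [IsOrderedAddMonoid R]
    {f : Finset X → R} (hf : IsSubmodular f) (S B : Finset X) :
    f (S ∪ B) - f S ≤ ∑ b ∈ B, (f (insert b S) - f S) := by
  induction B using Finset.induction_on with
  | empty => simp
  | insert b B hbB ih =>
    have marginal_le : f (insert b (S ∪ B)) - f (S ∪ B) ≤ f (insert b S) - f S := by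
      by_cases hbS : b ∈ S
      · simp [hbS]
      · exact hf Finset.subset_union_left b (by simp [hbS, hbB])
    rw [Finset.sum_insert hbB, Finset.union_insert]
    calc f (insert b (S ∪ B)) - f S
        = (f (insert b (S ∪ B)) - f (S ∪ B)) + (f (S ∪ B) - f S) := by abel
      _ ≤ _ := add_le_add marginal_le ih

theorem IsSubmodular.comp_filter [AddGroup R] [Preorder R] {f : Finset X → R}
    (hf : IsSubmodular f) (p : X → Prop) [DecidablePred p] :
    IsSubmodular fun S ↦ f (S.filter p) := by
  intro S T hST x hx
  by_cases hpx : p x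
  · simpa [Finset.filter_insert, hpx] using
      hf (Finset.filter_subset_filter p hST) x (by simp [hx])
  · simp [Finset.filter_insert, hpx]

theorem isSubmodular_neg_prod [CommRing R] [PartialOrder R] [IsOrderedRing R] {w : X → R}
    (hw : ∀ x, 0 ≤ w x) (hw1 : ∀ x, w x ≤ 1) :
    IsSubmodular fun S ↦ -∏ x ∈ S, w x := by
  intro S T hST x hxT
  have marginal_eq {U : Finset X} (hxU : x ∉ U) :
      -∏ z ∈ insert x U, w z - -∏ z ∈ U, w z = (1 - w x) * ∏ z ∈ U, w z := by
    rw [Finset.prod_insert hxU]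
    ring
  rw [marginal_eq hxT, marginal_eq fun hxS ↦ hxT (hST hxS)]
  exact mul_le_mul_of_nonneg_left (Finset.prod_anti_set_of_le_one hw hw1 hST)
    (sub_nonneg.2 (hw1 x))

end Submodular

section Greedy

variable {X R : Type*} [DecidableEq X]

/-- A run of greedy maximization of `f`: each step inserts an element whose insertion makes `f`
largest. The starting set is arbitrary, and an element already chosen may be chosen again. -/
def IsGreedy [LE R] (f : Finset X → R) (A : ℕ → Finset X) : Prop :=
  ∀ t, ∃ x, A (t + 1) = insert x (A t) ∧ ∀ z, f (insert z (A t)) ≤ f (insert x (A t))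

variable {A : ℕ → Finset X} {B : Finset X}

theorem IsGreedy.gap_le_card_mul_gain [CommRing R] [PartialOrder R] [IsOrderedRing R]
    {f : Finset X → R} (hA : IsGreedy f A) (hmono : Monotone f) (hsub : IsSubmodular f)
    (B : Finset X) (t : ℕ) : f B - f (A t) ≤ B.card * (f (A (t + 1)) - f (A t)) := by
  obtain ⟨x, hx, hmax⟩ := hA t
  calc f B - f (A t) ≤ f (A t ∪ B) - f (A t) :=
        sub_le_sub_right (hmono Finset.subset_union_right) _
    _ ≤ ∑ b ∈ B, (f (insert b (A t)) - f (A t)) := hsub.union_sub_le_sum _ _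
    _ ≤ ∑ _b ∈ B, (f (A (t + 1)) - f (A t)) :=
        Finset.sum_le_sum fun b _ ↦ sub_le_sub_right (hx ▸ hmax b) _
    _ = B.card * (f (A (t + 1)) - f (A t)) := by rw [Finset.sum_const, nsmul_eq_mul]

theorem IsGreedy.gap_le_pow_mul_gap [Field R] [LinearOrder R] [IsStrictOrderedRing R]
    {f : Finset X → R} (hA : IsGreedy f A) (hmono : Monotone f) (hsub : IsSubmodular f)
    (hB : B.Nonempty) (t : ℕ) :
    f B - f (A t) ≤ (1 - 1 / B.card) ^ t * (f B - f (A 0)) := by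
  have card_pos : (0 : R) < B.card := by exact_mod_cast hB.card_pos
  induction t with
  | zero => simp
  | succ t ih =>
    have gain_ge : (f B - f (A t)) / B.card ≤ f (A (t + 1)) - f (A t) :=
      (div_le_iff₀' card_pos).2 (hA.gap_le_card_mul_gain hmono hsub B t)
    calc f B - f (A (t + 1)) ≤ (f B - f (A t)) - (f B - f (A t)) / B.card := by linarith
      _ = (1 - 1 / B.card) * (f B - f (A t)) := by ring
      _ ≤ (1 - 1 / B.card) * ((1 - 1 / B.card) ^ t * (f B - f (A 0))) :=
          mul_le_mul_of_nonneg_left ih (Nat.one_sub_one_div_cast_nonneg _)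
      _ = (1 - 1 / B.card) ^ (t + 1) * (f B - f (A 0)) := by ring

theorem IsGreedy.gap_le_exp_mul_gap {f : Finset X → ℝ} (hA : IsGreedy f A) (hA0 : A 0 = ∅)
    (hmono : Monotone f) (hsub : IsSubmodular f) (hB : B.Nonempty) (t : ℕ) :
    f B - f (A t) ≤ Real.exp (-(t / B.card)) * (f B - f ∅) := by
  have pow_le_exp : (1 - 1 / B.card : ℝ) ^ t ≤ Real.exp (-(t / B.card)) :=
    calc (1 - 1 / B.card : ℝ) ^ t ≤ Real.exp (-(1 / B.card)) ^ t :=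
          pow_le_pow_left₀ (Nat.one_sub_one_div_cast_nonneg _) (Real.one_sub_le_exp_neg _) t
      _ = Real.exp (-(t / B.card)) := by
          rw [← Real.exp_nat_mul]
          ring_nf
  calc f B - f (A t) ≤ (1 - 1 / B.card) ^ t * (f B - f ∅) :=
        hA0 ▸ hA.gap_le_pow_mul_gap hmono hsub hB t
    _ ≤ Real.exp (-(t / B.card)) * (f B - f ∅) :=
        mul_le_mul_of_nonneg_right pow_le_exp (sub_nonneg.2 (hmono (Finset.empty_subset B)))

end Greedy

theorem exp_neg_div_mul_le_of_mul_log_le {k E δ l : ℝ} (hk : 0 < k) (hE : 0 < E) (hδ : 0 < δ)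
    (hl : k * Real.log (E / δ) ≤ l) : Real.exp (-(l / k)) * E ≤ δ := by
  have log_le : Real.log (E / δ) ≤ l / k := (le_div_iff₀' hk).2 hl
  calc Real.exp (-(l / k)) * E ≤ Real.exp (-Real.log (E / δ)) * E := by gcongr
    _ = δ := by
        rw [Real.exp_neg, Real.exp_log (div_pos hE hδ)]
        field_simp

section MistakeWeight

variable {X : Type*} {p : X → Prop} {w : X → ℝ} {c : ℝ}

/-- The learner weight of a hypothesis with prior `c`: each shown example on which it is mistaken
(predicate `p`) discounts it by the likelihood `w`. -/
noncomputable def mistakeWeight (c : ℝ) (p : X → Prop) (w : X → ℝ) (S : Finset X) : ℝ :=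
  c * ∏ x ∈ S with p x, w x

theorem mistakeWeight_empty (c : ℝ) (p : X → Prop) (w : X → ℝ) : mistakeWeight c p w ∅ = c := by
  simp [mistakeWeight]

theorem mistakeWeight_of_forall_not (hp : ∀ x, ¬p x) (c : ℝ) (w : X → ℝ) (S : Finset X) :
    mistakeWeight c p w S = c := by
  simp [mistakeWeight, hp]

theorem mistakeWeight_nonneg (hc : 0 ≤ c) (hw : ∀ x, 0 ≤ w x) (S : Finset X) :
    0 ≤ mistakeWeight c p w S :=
  mul_nonneg hc (Finset.prod_nonneg fun x _ ↦ hw x)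

theorem antitone_mistakeWeight (hc : 0 ≤ c) (hw : ∀ x, 0 ≤ w x) (hw1 : ∀ x, w x ≤ 1) :
    Antitone (mistakeWeight c p w) := fun _ _ hST ↦
  mul_le_mul_of_nonneg_left
    (Finset.prod_anti_set_of_le_one hw hw1 (Finset.filter_subset_filter p hST)) hc

theorem isSubmodular_neg_mistakeWeight (hc : 0 ≤ c) (hw : ∀ x, 0 ≤ w x) (hw1 : ∀ x, w x ≤ 1) :
    IsSubmodular (-mistakeWeight c p w) := by
  intro S T hST x hx
  have marginal_le := mul_le_mul_of_nonneg_left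
    ((isSubmodular_neg_prod hw hw1).comp_filter p hST x hx) hc
  simpa only [mistakeWeight, Pi.neg_apply, mul_sub, mul_neg] using marginal_le

end MistakeWeight

section Teaching

variable {X H : Type*} [Fintype H]

/-- The error `∑ h, Q h S * err h` under the unnormalized learner weights `Q` after being shown the
teaching set `S`. -/
def weightedError (Q : H → Finset X → ℝ) (err : H → ℝ) (S : Finset X) : ℝ :=
  ∑ h, Q h S * err h

/-- The expected learner error `E[err_L | S]`: the mean of `err` under the normalized weights. -/
noncomputable def posteriorError (Q : H → Finset X → ℝ) (err : H → ℝ) (S : Finset X) : ℝ :=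
  ∑ h, Q h S / (∑ g, Q g S) * err h

/-- The teaching surrogate `F`: the weighted error removed by showing `S`. The prior is encoded as
the weight `Q h ∅`. -/
def teachingSurrogate (Q : H → Finset X → ℝ) (err : H → ℝ) (S : Finset X) : ℝ :=
  ∑ h, (Q h ∅ - Q h S) * err h

variable {Q : H → Finset X → ℝ} {err : H → ℝ}

theorem posteriorError_eq_div (Q : H → Finset X → ℝ) (err : H → ℝ) (S : Finset X) :
    posteriorError Q err S = weightedError Q err S / ∑ h, Q h S := by
  simp only [posteriorError, weightedError, Finset.sum_div, div_mul_eq_mul_div]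

theorem teachingSurrogate_eq_sub (Q : H → Finset X → ℝ) (err : H → ℝ) (S : Finset X) :
    teachingSurrogate Q err S = weightedError Q err ∅ - weightedError Q err S := by
  simp only [teachingSurrogate, weightedError, sub_mul, Finset.sum_sub_distrib]

theorem weightedError_nonneg (hQ : ∀ h S, 0 ≤ Q h S) (herr : ∀ h, 0 ≤ err h) (S : Finset X) :
    0 ≤ weightedError Q err S :=
  Finset.sum_nonneg fun h _ ↦ mul_nonneg (hQ h S) (herr h)

theorem monotone_teachingSurrogate (hQ : ∀ h, Antitone (Q h)) (herr : ∀ h, 0 ≤ err h) :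
    Monotone (teachingSurrogate Q err) := fun _ _ hST ↦
  Finset.sum_le_sum fun h _ ↦
    mul_le_mul_of_nonneg_right (sub_le_sub_left (hQ h hST) _) (herr h)

theorem isSubmodular_teachingSurrogate [DecidableEq X] (hQ : ∀ h, IsSubmodular (-Q h))
    (herr : ∀ h, 0 ≤ err h) : IsSubmodular (teachingSurrogate Q err) := by
  intro S T hST x hx
  have marginal_eq (U : Finset X) :
      teachingSurrogate Q err (insert x U) - teachingSurrogate Q err U =
        ∑ h, ((-Q h) (insert x U) - (-Q h) U) * err h := by
    simp only [teachingSurrogate, ← Finset.sum_sub_distrib, Pi.neg_apply]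
    exact Finset.sum_congr rfl fun h _ ↦ by ring
  rw [marginal_eq, marginal_eq]
  exact Finset.sum_le_sum fun h _ ↦ mul_le_mul_of_nonneg_right (hQ h hST x hx) (herr h)

theorem weightedError_le_posteriorError (hQ : ∀ h S, 0 ≤ Q h S) (herr : ∀ h, 0 ≤ err h)
    {S : Finset X} (hpos : 0 < ∑ h, Q h S) (hle : ∑ h, Q h S ≤ 1) :
    weightedError Q err S ≤ posteriorError Q err S := by
  rw [posteriorError_eq_div]
  exact le_div_self (weightedError_nonneg hQ herr S) hpos hle

theorem posteriorError_le_weightedError_div (hQ : ∀ h S, 0 ≤ Q h S) (herr : ∀ h, 0 ≤ err h)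
    {S : Finset X} {h : H} (hpos : 0 < Q h S) :
    posteriorError Q err S ≤ weightedError Q err S / Q h S := by
  rw [posteriorError_eq_div]
  exact div_le_div_of_nonneg_left (weightedError_nonneg hQ herr S) hpos
    (Finset.single_le_sum (f := (Q · S)) (fun g _ ↦ hQ g S) (Finset.mem_univ h))

theorem weightedError_greedy_le [DecidableEq X] (hQ : ∀ h S, 0 ≤ Q h S)
    (hanti : ∀ h, Antitone (Q h)) (hsuper : ∀ h, IsSubmodular (-Q h)) (herr : ∀ h, 0 ≤ err h)
    {A : ℕ → Finset X} (hA0 : A 0 = ∅) (hA : IsGreedy (teachingSurrogate Q err) A)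
    {B : Finset X} (hB : B.Nonempty) (t : ℕ) :
    weightedError Q err (A t) ≤
      weightedError Q err B + Real.exp (-(t / B.card)) * weightedError Q err ∅ := by
  have gap_le := hA.gap_le_exp_mul_gap hA0 (monotone_teachingSurrogate hanti herr)
    (isSubmodular_teachingSurrogate hsuper herr) hB t
  simp only [teachingSurrogate_eq_sub] at gap_le
  have discarded_nonneg : 0 ≤ Real.exp (-(t / B.card)) * weightedError Q err B :=
    mul_nonneg (Real.exp_nonneg _) (weightedError_nonneg hQ herr B)
  linarith

theorem stmt_9_general [DecidableEq X] (hQ : ∀ h S, 0 ≤ Q h S) (hanti : ∀ h, Antitone (Q h))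
    (hsuper : ∀ h, IsSubmodular (-Q h)) (hprior : ∑ h, Q h ∅ = 1) (herr : ∀ h, 0 ≤ err h)
    {hstar : H} (hstar_pos : 0 < Q hstar ∅) (hstar_const : ∀ S, Q hstar S = Q hstar ∅)
    {ε : ℝ} (hε : 0 < ε) (hε2 : Q hstar ∅ * ε < 2 * weightedError Q err ∅)
    {B : Finset X} (hB : posteriorError Q err B ≤ Q hstar ∅ * ε / 2)
    {A : ℕ → Finset X} (hA0 : A 0 = ∅) (hA : IsGreedy (teachingSurrogate Q err) A)
    {l : ℕ} (hl : B.card * Real.log (2 * weightedError Q err ∅ / (Q hstar ∅ * ε)) ≤ l) :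
    posteriorError Q err (A l) ≤ ε := by
  have target_pos : 0 < Q hstar ∅ * ε / 2 := by positivity
  have normalizer_pos : 0 < ∑ h, Q h B :=
    (hstar_const B ▸ hstar_pos).trans_le
      (Finset.single_le_sum (f := (Q · B)) (fun h _ ↦ hQ h B) (Finset.mem_univ hstar))
  have normalizer_le_one : ∑ h, Q h B ≤ 1 :=
    hprior ▸ Finset.sum_le_sum fun h _ ↦ hanti h (Finset.empty_subset B)
  have weightedError_B_le : weightedError Q err B ≤ Q hstar ∅ * ε / 2 :=
    (weightedError_le_posteriorError hQ herr normalizer_pos normalizer_le_one).trans hB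
  have B_nonempty : B.Nonempty := by
    rw [Finset.nonempty_iff_ne_empty]
    rintro rfl
    linarith
  have decay_le : Real.exp (-(l / B.card)) * weightedError Q err ∅ ≤ Q hstar ∅ * ε / 2 := by
    refine exp_neg_div_mul_le_of_mul_log_le (by exact_mod_cast B_nonempty.card_pos)
      (by linarith) target_pos ?_
    rwa [div_div_eq_mul_div, mul_comm _ (2 : ℝ)]
  calc posteriorError Q err (A l) ≤ weightedError Q err (A l) / Q hstar ∅ :=
        hstar_const (A l) ▸
          posteriorError_le_weightedError_div hQ herr (hstar_const (A l) ▸ hstar_pos)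
    _ ≤ ε := by
        rw [div_le_iff₀' hstar_pos]
        linarith [weightedError_greedy_le hQ hanti hsuper herr hA0 hA B_nonempty l]

end Teaching

/-- Theorem 1 (STRICT guarantee): if `OPT` is the size of the smallest teaching set
achieving expected error at most `P0(h*)·ε/2`, then greedy maximization of `F` run
for `ℓ ≥ OPT · ln(2E/(P0(h*)·ε))` steps yields a set with expected error at most `ε`. -/
theorem stmt_9
    {X H : Type*} [Fintype X] [Nonempty X] [Fintype H]
    (hyp : H → X → ℝ) (hnz : ∀ h x, hyp h x ≠ 0)
    (y : X → ℝ) (hy : ∀ x, y x = 1 ∨ y x = -1)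
    (hstar : H) (hreal : ∀ x, Real.sign (hyp hstar x) = y x)
    (P0 : H → ℝ) (hP0pos : ∀ h, 0 < P0 h) (hP0sum : ∑ h, P0 h = 1)
    (α : ℝ) (hα : 0 < α)
    (Q : H → Finset X → ℝ)
    (hQ : ∀ h A, Q h A =
      P0 h * ∏ x ∈ A.filter (fun x => y x ≠ Real.sign (hyp h x)),
        (1 / (1 + Real.exp (-(α * hyp h x * y x)))))
    (Z : Finset X → ℝ) (hZ : ∀ A, Z A = ∑ h, Q h A)
    (P : H → Finset X → ℝ) (hP : ∀ h A, P h A = Q h A / Z A)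
    (err : H → ℝ)
    (herr : ∀ h, err h =
      ((Finset.univ.filter
        (fun x => Real.sign (hyp h x) ≠ Real.sign (hyp hstar x))).card : ℝ)
        / (Fintype.card X : ℝ))
    (F : Finset X → ℝ)
    (hF : ∀ A, F A = ∑ h, (P0 h - Q h A) * err h)
    (Err : Finset X → ℝ)
    (hErr : ∀ A, Err A = ∑ h, P h A * err h)
    (Etot : ℝ) (hEtot : Etot = ∑ h, P0 h * err h) (hEpos : 0 < Etot)
    (ε : ℝ) (hε : 0 < ε) (hε0 : 0 < P0 hstar * ε) (hε2 : P0 hstar * ε < 2 * Etot)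
    (OPT : ℕ)
    (hOPT1 : ∃ B : Finset X, B.card = OPT ∧ Err B ≤ P0 hstar * ε / 2)
    (hOPT2 : ∀ B : Finset X, Err B ≤ P0 hstar * ε / 2 → OPT ≤ B.card)
    (A : ℕ → Finset X) (hA0 : A 0 = ∅)
    (hAgreedy : ∀ t : ℕ, ∃ xt : X, A (t + 1) = insert xt (A t) ∧
      ∀ x : X, F (insert x (A t)) ≤ F (insert xt (A t))) :
    ∀ ℓ : ℕ, (ℓ : ℝ) ≥ (OPT : ℝ) * Real.log (2 * Etot / (P0 hstar * ε)) →
      Err (A ℓ) ≤ ε := by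
  intro ℓ hℓ
  obtain ⟨B, rfl, hB⟩ := hOPT1
  have hQ_eq (h : H) : Q h = mistakeWeight (P0 h) (fun x ↦ y x ≠ Real.sign (hyp h x))
      fun x ↦ Real.sigmoid (α * hyp h x * y x) := funext fun S ↦ by
    simp only [hQ, mistakeWeight, Real.sigmoid_def, one_div]
  have hQ_empty (h : H) : Q h ∅ = P0 h := hQ_eq h ▸ mistakeWeight_empty _ _ _
  obtain rfl : Err = posteriorError Q err := funext fun S ↦ by
    simp only [hErr, hP, hZ, posteriorError]
  obtain rfl : F = teachingSurrogate Q err := funext fun S ↦ by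
    simp only [hF, teachingSurrogate, hQ_empty]
  obtain rfl : Etot = weightedError Q err ∅ := by
    simp only [hEtot, weightedError, hQ_empty]
  rw [← hQ_empty hstar] at hB hε2 hℓ
  have hlik_nonneg (h : H) (x : X) := Real.sigmoid_nonneg (α * hyp h x * y x)
  have hlik_le_one (h : H) (x : X) := Real.sigmoid_le_one (α * hyp h x * y x)
  exact stmt_9_general
    (fun h ↦ hQ_eq h ▸ mistakeWeight_nonneg (hP0pos h).le (hlik_nonneg h))
    (fun h ↦ hQ_eq h ▸ antitone_mistakeWeight (hP0pos h).le (hlik_nonneg h) (hlik_le_one h))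
    (fun h ↦ hQ_eq h ▸ isSubmodular_neg_mistakeWeight (hP0pos h).le (hlik_nonneg h) (hlik_le_one h))
    (by simp only [hQ_empty, hP0sum]) (fun h ↦ herr h ▸ by positivity)
    (hQ_empty hstar ▸ hP0pos hstar)
    (fun S ↦ by rw [hQ_empty, hQ_eq, mistakeWeight_of_forall_not (by simp [hreal])])
    hε hε2 hB hA0 hAgreedy hℓ
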